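/- arXiv:2012.08162 — 2 statements merged into one kernel-verified Lean document; each statement's English description precedes it below -/
import Mathlib

section
/- Let X be a finite-dimensional real Banach space. Then every y ∈ S_X is C-approximately right-symmetric (i.e., for each y ∈ S_X there exists ε_y ∈ [0,1) such that for all z ∈ X, z ⊥_B y implies y ⊥_B^{ε_y} z) if and only if every x ∈ S_X has the local property (P). -/
/-!
The link between the two conditions is the dual description of approximate orthogonality:
for unit `y`, `y ⊥_B^ε z` holds as soon as some `f ∈ J(y)` has `|f z| ≤ ε ‖z‖`
(`bOrth_of_suppJ`), and conversely `y ⊥_B^ε x` yields `f ∈ J(y)` with `f x ≤ ε`, obtained as a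
limit of functionals norming `y - t x` as `t → 0⁺` (`exists_suppJ_le`).

If `x` fails (P) through `y`, then `|f x| = 1` for all `f ∈ J(y)`. Applying the converse to `x` and
`-x`, approximate orthogonality with `ε < 1` gives `f, g ∈ J(y)` with `f x = -1` and `g x = 1`; their
midpoint lies in `J(y)` and vanishes at `x`, a contradiction.

If (P) holds everywhere, then for fixed `y` each unit `z ⊥_B y` admits `f ∈ J(y)` with `|f z| < 1`,
so a single `ε < 1` works on a neighbourhood of `z`. The set of such `z` is compact, which gives
an `ε` uniform in `z`.
-/

open Set Metric

section Defs

variable {E : Type*} [NormedAddCommGroup E] [NormedSpace ℝ E]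

/-- Birkhoff-James orthogonality: `x ⊥_B y` iff `‖x + t • y‖ ≥ ‖x‖` for all real `t`. -/
def BJOrth (x y : E) : Prop := ∀ t : ℝ, ‖x‖ ≤ ‖x + t • y‖

/-- Dragomir-type approximate orthogonality: `x ⊥_D^ε y` iff
`‖x + t • y‖ ≥ √(1 - ε²) ‖x‖` for all real `t`. -/
def DOrth (ε : ℝ) (x y : E) : Prop :=
  ∀ t : ℝ, Real.sqrt (1 - ε ^ 2) * ‖x‖ ≤ ‖x + t • y‖

/-- Chmieliński-type approximate orthogonality: `x ⊥_B^ε y` iff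
`‖x + t • y‖² ≥ ‖x‖² - 2 ε ‖x‖ ‖t • y‖` for all real `t`. -/
def BOrth (ε : ℝ) (x y : E) : Prop :=
  ∀ t : ℝ, ‖x‖ ^ 2 - 2 * ε * ‖x‖ * ‖t • y‖ ≤ ‖x + t • y‖ ^ 2

/-- The set of supporting functionals at `x`. -/
def SuppJ (x : E) : Set (E →L[ℝ] ℝ) := {f | ‖f‖ = 1 ∧ f x = ‖x‖}

/-- The local property (P) at `x`: there is no unit vector `y` with `x ⊥_B y` such that
every supporting functional of `y` (or its negative) supports `x`. -/
def LocalP (x : E) : Prop :=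
  ¬ ∃ y : E, ‖y‖ = 1 ∧ BJOrth x y ∧ ∀ f ∈ SuppJ y, f ∈ SuppJ x ∨ -f ∈ SuppJ x

end Defs

lemma mem_suppJ_of_le {E : Type*} [NormedAddCommGroup E] [NormedSpace ℝ E] {y : E}
    (hy : ‖y‖ = 1) {f : E →L[ℝ] ℝ} (hf : ‖f‖ ≤ 1) (hfy : 1 ≤ f y) : f ∈ SuppJ y := by
  have h := (le_abs_self (f y)).trans (f.le_opNorm y)
  rw [hy, mul_one] at h
  exact ⟨by linarith, by rw [hy]; linarith⟩

lemma abs_apply_le_norm {E : Type*} [NormedAddCommGroup E] [NormedSpace ℝ E]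
    {f : E →L[ℝ] ℝ} (hf : ‖f‖ ≤ 1) (v : E) : |f v| ≤ ‖v‖ := by
  have h := f.le_opNorm v
  rw [Real.norm_eq_abs] at h
  exact h.trans (mul_le_of_le_one_left (norm_nonneg v) hf)

lemma bOrth_of_suppJ {E : Type*} [NormedAddCommGroup E] [NormedSpace ℝ E] {y z : E} {ε : ℝ}
    (hy : ‖y‖ = 1) {f : E →L[ℝ] ℝ} (hf : f ∈ SuppJ y) (hz : |f z| ≤ ε * ‖z‖) : BOrth ε y z := by
  intro t
  have h1 := (le_abs_self _).trans (abs_apply_le_norm hf.1.le (y + t • z))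
  have h2 : f (y + t • z) = 1 + t * f z := by simp [hf.2, hy]
  have h3 : -(|t| * (ε * ‖z‖)) ≤ t * f z := by
    have := neg_abs_le (t * f z)
    rw [abs_mul] at this
    have := mul_le_mul_of_nonneg_left hz (abs_nonneg t)
    linarith
  rw [hy, norm_smul, Real.norm_eq_abs]
  -- With `a = ‖y + t • z‖`, use `a ^ 2 ≥ 2 * a - 1` and `a ≥ 1 - ε * |t| * ‖z‖`.
  nlinarith [sq_nonneg (‖y + t • z‖ - 1)]

lemma bOrth_mono {E : Type*} [NormedAddCommGroup E] [NormedSpace ℝ E] {y z : E} {ε δ : ℝ}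
    (h : ε ≤ δ) (hz : BOrth ε y z) : BOrth δ y z := by
  intro t
  have := mul_le_mul_of_nonneg_right h (mul_nonneg (norm_nonneg y) (norm_nonneg (t • z)))
  linarith [hz t]

lemma bOrth_smul {E : Type*} [NormedAddCommGroup E] [NormedSpace ℝ E] {y z : E} {ε : ℝ}
    (c : ℝ) (hz : BOrth ε y z) : BOrth ε y (c • z) := by
  intro t
  simpa only [smul_smul] using hz (t * c)

/-- A functional `f` norming `y - t x` satisfies `‖y - t x‖ ≤ 1 - t f(x)`, so approximate
orthogonality forces `f x ≤ ε + t / 2`, while `f y ≥ 1 - 2 t`. A cluster point as `t → 0⁺`, which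
exists because the dual ball is compact, is the required supporting functional. -/
lemma exists_suppJ_le {X : Type*} [NormedAddCommGroup X] [NormedSpace ℝ X]
    [FiniteDimensional ℝ X] {x y : X} {ε : ℝ} (hx : ‖x‖ = 1) (hy : ‖y‖ = 1)
    (h : BOrth ε y x) : ∃ f ∈ SuppJ y, f x ≤ ε := by
  have key : ∀ n : ℕ, ∃ f : X →L[ℝ] ℝ, f ∈ closedBall (0 : X →L[ℝ] ℝ) 1 ∧
      1 - 2 * (1 / ((n : ℝ) + 1)) ≤ f y ∧ f x ≤ ε + (1 / ((n : ℝ) + 1)) / 2 := by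
    intro n
    set t : ℝ := 1 / ((n : ℝ) + 1) with ht
    have ht0 : 0 < t := by positivity
    obtain ⟨f, hf, hfv⟩ := exists_dual_vector'' ℝ (y + (-t) • x)
    have hfx := abs_apply_le_norm hf x
    have hfy := (le_abs_self _).trans (abs_apply_le_norm hf y)
    rw [hx, abs_le] at hfx
    rw [hy] at hfy
    have hval : ‖y + (-t) • x‖ = f y - t * f x := by
      have : f (y + (-t) • x) = f y - t * f x := by simp [sub_eq_add_neg]
      rw [← this]; simpa using hfv.symm
    have hlow : 1 - t ≤ ‖y + (-t) • x‖ := by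
      have := norm_sub_norm_le y (t • x)
      rw [norm_smul, hx, hy, Real.norm_eq_abs, abs_of_pos ht0] at this
      simpa [sub_eq_add_neg] using this
    have hb := h (-t)
    rw [hy, norm_smul, hx, norm_neg, Real.norm_eq_abs, abs_of_pos ht0] at hb
    have hup : ‖y + (-t) • x‖ ^ 2 ≤ (1 - t * f x) ^ 2 :=
      pow_le_pow_left₀ (norm_nonneg _) (by linarith) 2
    refine ⟨f, by simpa using hf, by nlinarith, ?_⟩
    have hsq : f x ^ 2 ≤ 1 := by nlinarith
    have : t * (f x) ≤ t * (ε + t / 2) := by nlinarith [mul_pos ht0 ht0]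
    exact le_of_mul_le_mul_left this ht0
  choose f hfB hfy hfx using key
  obtain ⟨g, hg, φ, hφ, hlim⟩ := (isCompact_closedBall (0 : X →L[ℝ] ℝ) 1).tendsto_subseq hfB
  have h0 := (tendsto_one_div_add_atTop_nhds_zero_nat (𝕜 := ℝ)).comp hφ.tendsto_atTop
  have hev : ∀ v : X, Filter.Tendsto (fun n => f (φ n) v) Filter.atTop (nhds (g v)) := fun v =>
    (((ContinuousLinearMap.apply ℝ ℝ v).continuous.tendsto g).comp hlim)
  refine ⟨g, mem_suppJ_of_le hy (by simpa using hg) ?_, ?_⟩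
  · refine le_of_tendsto_of_tendsto' (f := fun n => 1 - 2 * (1 / ((φ n : ℝ) + 1))) ?_ (hev y)
      fun n => hfy (φ n)
    simpa using (h0.const_mul 2).const_sub 1
  · refine le_of_tendsto_of_tendsto' (g := fun n => ε + (1 / ((φ n : ℝ) + 1)) / 2) (hev x) ?_
      fun n => hfx (φ n)
    simpa using (h0.div_const 2).const_add ε

lemma localP_of_bOrth {X : Type*} [NormedAddCommGroup X] [NormedSpace ℝ X]
    [FiniteDimensional ℝ X]
    (H : ∀ y : X, ‖y‖ = 1 → ∃ ε ∈ Set.Ico (0 : ℝ) 1, ∀ z : X, BJOrth z y → BOrth ε y z)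
    {x : X} (hx : ‖x‖ = 1) : LocalP x := by
  rintro ⟨y, hy, hxy, hJ⟩
  obtain ⟨ε, ⟨hε0, hε1⟩, hε⟩ := H y hy
  have hJ' : ∀ f ∈ SuppJ y, f x = 1 ∨ f x = -1 := by
    intro f hf
    rcases hJ f hf with h | h
    · exact Or.inl (h.2.trans hx)
    · have := h.2
      rw [hx, neg_apply] at this
      exact Or.inr (by linarith)
  obtain ⟨f, hf, hfx⟩ := exists_suppJ_le hx hy (hε x hxy)
  have hneg : BOrth ε y (-x) := by simpa using bOrth_smul (-1) (hε x hxy)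
  obtain ⟨g, hg, hgx⟩ := exists_suppJ_le (by simpa using hx) hy hneg
  rw [map_neg] at hgx
  have hfx' : f x = -1 := (hJ' f hf).resolve_left (by intro h; linarith)
  have hgx' : g x = 1 := (hJ' g hg).resolve_right (by intro h; linarith)
  have hmid : (1 / 2 : ℝ) • (f + g) ∈ SuppJ y := by
    refine mem_suppJ_of_le hy ?_ ?_
    · have := norm_add_le f g
      rw [hf.1, hg.1] at this
      rw [norm_smul, Real.norm_eq_abs, abs_of_pos (by norm_num)]
      linarith
    · simp only [smul_apply, add_apply, hf.2, hg.2, hy,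
        smul_eq_mul]
      norm_num
  have h0 := hJ' _ hmid
  simp [hfx', hgx'] at h0

lemma bOrth_of_localP {X : Type*} [NormedAddCommGroup X] [NormedSpace ℝ X]
    [FiniteDimensional ℝ X] (H : ∀ x : X, ‖x‖ = 1 → LocalP x) {y : X} (hy : ‖y‖ = 1) :
    ∃ ε ∈ Set.Ico (0 : ℝ) 1, ∀ z : X, BJOrth z y → BOrth ε y z := by
  have hK : IsCompact (sphere (0 : X) 1 ∩ {z | BJOrth z y}) := by
    refine (isCompact_sphere (0 : X) 1).inter_right ?_
    simp only [BJOrth, Set.ofPred_forall]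
    exact isClosed_iInter fun t => isClosed_le (by fun_prop) (by fun_prop)
  have hunif : ∃ ε ∈ Set.Ico (0 : ℝ) 1,
      ∀ z ∈ sphere (0 : X) 1 ∩ {z | BJOrth z y}, BOrth ε y z := by
    refine hK.induction_on (p := fun s => ∃ ε ∈ Set.Ico (0 : ℝ) 1, ∀ z ∈ s, BOrth ε y z)
      ⟨0, by simp, by simp⟩ ?_ ?_ ?_
    · rintro s t hst ⟨ε, hε, h⟩
      exact ⟨ε, hε, fun z hz => h z (hst hz)⟩
    · rintro s t ⟨ε, hε, h⟩ ⟨δ, hδ, h'⟩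
      refine ⟨max ε δ, ⟨le_max_of_le_left hε.1, max_lt hε.2 hδ.2⟩, ?_⟩
      rintro z (hz | hz)
      · exact bOrth_mono (le_max_left _ _) (h z hz)
      · exact bOrth_mono (le_max_right _ _) (h' z hz)
    · rintro z ⟨hz, hzy⟩
      have hz1 : ‖z‖ = 1 := by simpa using hz
      have hP := H z hz1
      simp only [LocalP, not_exists, not_and, not_forall, not_or] at hP
      obtain ⟨f, hf, hf1, hf2⟩ := hP y hy hzy
      have habs := abs_apply_le_norm hf.1.le z
      have hlt : |f z| < 1 := by
        refine lt_of_le_of_ne (habs.trans hz1.le) fun h => ?_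
        rcases (abs_eq zero_le_one).1 h with h | h
        · exact hf1 ⟨hf.1, h.trans hz1.symm⟩
        · exact hf2 ⟨by rw [norm_neg, hf.1], by
            rw [neg_apply, h, hz1, neg_neg]⟩
      obtain ⟨ε, hε, hε1⟩ := exists_between hlt
      refine ⟨_, inter_mem_nhdsWithin _ (IsOpen.mem_nhds
        (isOpen_lt (f := fun w => |f w|) (g := fun _ => ε) (by fun_prop) (by fun_prop)) hε),
        ε, ⟨(abs_nonneg _).trans hε.le, hε1⟩, ?_⟩
      rintro w ⟨⟨hw, -⟩, hwε⟩
      have hw1 : ‖w‖ = 1 := by simpa using hw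
      exact bOrth_of_suppJ hy hf (by rw [hw1, mul_one]; exact le_of_lt hwε)
  obtain ⟨ε, hε, h⟩ := hunif
  refine ⟨ε, hε, fun z hz => ?_⟩
  by_cases hz0 : z = 0
  · subst hz0
    intro t
    simp
  have hn : ‖z‖ ≠ 0 := norm_ne_zero_iff.2 hz0
  have hmem : ‖z‖⁻¹ • z ∈ sphere (0 : X) 1 ∩ {z | BJOrth z y} := by
    refine ⟨by simp [norm_smul, hn], fun t => ?_⟩
    have heq : ‖z‖⁻¹ • z + t • y = ‖z‖⁻¹ • (z + (‖z‖ * t) • y) := by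
      rw [smul_add, smul_smul, inv_mul_cancel_left₀ hn]
    rw [heq, norm_smul, norm_smul]
    exact mul_le_mul_of_nonneg_left (hz _) (norm_nonneg _)
  simpa [smul_smul, hn] using bOrth_smul ‖z‖ (h _ hmem)

theorem stmt_13 {X : Type*} [NormedAddCommGroup X] [NormedSpace ℝ X]
    [FiniteDimensional ℝ X] :
    (∀ y : X, ‖y‖ = 1 → ∃ ε ∈ Set.Ico (0 : ℝ) 1, ∀ z : X, BJOrth z y → BOrth ε y z) ↔
    (∀ x : X, ‖x‖ = 1 → LocalP x) :=
  ⟨fun H _ hx => localP_of_bOrth H hx, fun H _ hy => bOrth_of_localP H hy⟩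
end

section
/- Let X be a two-dimensional polyhedral real Banach space. Then the following are equivalent: (a) property (P1) holds for X, i.e., whenever the segment [x,y] is contained in S_X and x ⊥_B y, both x and y are extreme points of the closed unit ball of X; (b) every x ∈ S_X has the local property (P); (c) the Birkhoff-James orthogonality is C-approximately symmetric in X, i.e., there exists ε ∈ [0,1) such that for all x, y ∈ X, x ⊥_B y implies y ⊥_B^ε x. -/
/-!
Write `E` for the finite set of extreme points of the unit ball `B`, so that `B = conv E`.
Three facts carry the proof.

* A face `{z ∈ B | f z = 1}` is the convex hull of the points of `E` on it (`mem_hull_face`).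
  Hence every extreme point is exposed (`exists_exposing`), and every functional supporting a
  unit vector close to `x` supports `x` as well (`eventually_suppJ_subset`).
* In dimension two, two distinct points with `f u = f v = 1` form a basis, so `f` is determined
  by them (`exists_coords`); a non-extreme unit vector therefore has one supporting functional,
  and only finitely many functionals arise in this way.
* `x ⊥_B y` iff some supporting functional of `x` vanishes at `y` (`BJOrth.exists_suppJ`).

(P1) implies (P): if every functional supporting `y` supports `x` up to sign, (P1) makes `y`
extreme, and a functional exposing `y` forces `x = ± y`.

(P) or approximate symmetry implies (P1): let `f x = f y = 1` and `x ⊥_B y`. If `p`, one of the two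
vectors, is not extreme and `q` is the other one, then `‖p - t q‖ ≤ 1 - t` for small `t ≥ 0`
(`norm_sub_smul_le`). For `p = x` this contradicts `x ⊥_B y`, so `x` is always extreme. For `p = y`
it contradicts `y ⊥_B^ε x`. If (P) is assumed instead, non-extreme `y` is excluded because its only
supporting functional `f` also supports `x`.

(P1) implies approximate symmetry: it suffices to find `ε < 1` such that `x ⊥_B y` (unit vectors)
gives some `f` supporting `y` with `|f x| ≤ ε`. For extreme `y` take an exposing functional and
use compactness of `{x | ‖x‖ = 1, x ⊥_B y}`. For non-extreme `y` there are finitely many `f`, and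
for each of them the `x` involved cannot accumulate at a point with `|f x| = 1`: such a point would
itself be orthogonal to one of the `y`, against (P1).
-/

open Set Metric

section Helpers

lemma eventually_le_of_compact {Y : Type*} [TopologicalSpace Y] {K : Set Y} (hK : IsCompact K)
    {h : Y → ℝ} (hc : Continuous h) (hlt : ∀ x ∈ K, h x < 1) :
    ∀ᶠ ε in nhdsWithin (1 : ℝ) (Iio 1), ∀ x ∈ K, h x ≤ ε := by
  rcases K.eq_empty_or_nonempty with rfl | hne
  · simp
  · obtain ⟨x₀, hx₀, hmax⟩ := hK.exists_isMaxOn hne hc.continuousOn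
    filter_upwards [Ioo_mem_nhdsLT (hlt x₀ hx₀)] with ε hε x hx
    exact (hmax hx).trans hε.1.le

variable {X : Type*} [NormedAddCommGroup X] [NormedSpace ℝ X]

lemma abs_apply_le {f : X →L[ℝ] ℝ} (hf : ‖f‖ = 1) (z : X) : |f z| ≤ ‖z‖ := by
  have := f.le_opNorm z
  rwa [hf, one_mul, Real.norm_eq_abs] at this

/-! ### Birkhoff-James orthogonality and supporting functionals -/

lemma BJOrth.neg_left {x y : X} (h : BJOrth x y) : BJOrth (-x) y := by
  intro t
  have := h (-t)
  rw [norm_neg, ← norm_neg (-x + t • y)]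
  rwa [show -(-x + t • y) = x + (-t) • y by module]

lemma BJOrth.of_suppJ {x y : X} {f : X →L[ℝ] ℝ} (hf : f ∈ SuppJ x) (h0 : f y = 0) :
    BJOrth x y := by
  intro t
  have h1 := abs_apply_le hf.1 (x + t • y)
  have h2 := le_abs_self (f (x + t • y))
  rw [map_add, map_smul, h0, hf.2, smul_zero, add_zero] at h2 h1
  linarith

/-- The nontrivial half of the characterisation due to James, obtained from a norming functional of the class of `x` in the
quotient by the line spanned by `y`. -/
lemma BJOrth.exists_suppJ {x y : X} (h : BJOrth x y) (hx : x ≠ 0) :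
    ∃ f ∈ SuppJ x, f y = 0 := by
  let S : Submodule ℝ X := Submodule.span ℝ {y}
  have : IsClosed (S : Set X) := S.closed_of_finiteDimensional
  have hxn : 0 < ‖x‖ := norm_pos_iff.2 hx
  have hle : ‖x‖ ≤ ‖(Submodule.Quotient.mk x : X ⧸ S)‖ := by
    refine le_of_forall_pos_le_add fun ε hε => ?_
    obtain ⟨m, hm, hlt⟩ := Submodule.Quotient.norm_mk_lt
      (S := S) (Submodule.Quotient.mk x) hε
    rw [Submodule.Quotient.eq] at hm
    obtain ⟨c, hc⟩ := Submodule.mem_span_singleton.1 hm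
    have := h c
    rw [hc] at this
    have e : x + (m - x) = m := by abel
    rw [e] at this
    linarith
  have hne : (Submodule.Quotient.mk x : X ⧸ S) ≠ 0 := norm_pos_iff.1 (hxn.trans_le hle)
  obtain ⟨g, hg, hgx⟩ := exists_dual_vector ℝ (Submodule.Quotient.mk x : X ⧸ S)
    (norm_ne_zero_iff.2 hne)
  have hbound : ∀ z : X, ‖(g.toLinearMap ∘ₗ S.mkQ) z‖ ≤ 1 * ‖z‖ := by
    intro z
    have h1 := g.le_opNorm (Submodule.Quotient.mk z : X ⧸ S)
    have h2 := Submodule.Quotient.norm_mk_le S z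
    rw [hg] at h1
    calc _ ≤ 1 * ‖(Submodule.Quotient.mk z : X ⧸ S)‖ := h1
      _ ≤ _ := by linarith
  let f : X →L[ℝ] ℝ := (g.toLinearMap ∘ₗ S.mkQ).mkContinuous 1 hbound
  have hf1 : ‖f‖ ≤ 1 := LinearMap.mkContinuous_norm_le _ zero_le_one _
  have hfx : f x = ‖(Submodule.Quotient.mk x : X ⧸ S)‖ := hgx
  have hfle : f x ≤ ‖f‖ * ‖x‖ := (le_abs_self _).trans (f.le_opNorm x)
  have hfx' : f x = ‖x‖ := le_antisymm (by nlinarith) (hfx ▸ hle)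
  refine ⟨f, ⟨le_antisymm hf1 ?_, hfx'⟩, ?_⟩
  · rw [hfx'] at hfle
    by_contra hcon
    push Not at hcon
    nlinarith
  · have : (Submodule.Quotient.mk y : X ⧸ S) = 0 :=
      (Submodule.Quotient.mk_eq_zero S).2 (Submodule.mem_span_singleton_self y)
    change g (Submodule.Quotient.mk y : X ⧸ S) = 0
    rw [this, map_zero]

lemma segment_subset_sphere {f : X →L[ℝ] ℝ} (hf : ‖f‖ = 1) {x y : X} (hx : ‖x‖ = 1)
    (hy : ‖y‖ = 1) (hfx : f x = 1) (hfy : f y = 1) : segment ℝ x y ⊆ sphere (0 : X) 1 := by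
  rintro _ ⟨a, b, ha, hb, hab, rfl⟩
  rw [mem_sphere_zero_iff_norm]
  refine le_antisymm ?_ ?_
  · refine (norm_add_le _ _).trans ?_
    rw [norm_smul, norm_smul, hx, hy, Real.norm_of_nonneg ha, Real.norm_of_nonneg hb]
    linarith
  · have h1 := (le_abs_self _).trans (abs_apply_le hf (a • x + b • y))
    simp only [map_add, map_smul, hfx, hfy, smul_eq_mul, mul_one, hab] at h1
    exact h1

/-- A functional supporting the midpoint supports both endpoints. -/
lemma exists_common_support {x y : X} (h : segment ℝ x y ⊆ sphere (0 : X) 1) :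
    ‖x‖ = 1 ∧ ‖y‖ = 1 ∧ ∃ f : X →L[ℝ] ℝ, ‖f‖ = 1 ∧ f x = 1 ∧ f y = 1 := by
  have hx : ‖x‖ = 1 := by simpa using h (left_mem_segment ℝ x y)
  have hy : ‖y‖ = 1 := by simpa using h (right_mem_segment ℝ x y)
  have hm : ‖(1 / 2 : ℝ) • x + (1 / 2 : ℝ) • y‖ = 1 := by
    have : (1 / 2 : ℝ) • x + (1 / 2 : ℝ) • y ∈ segment ℝ x y :=
      ⟨1 / 2, 1 / 2, by norm_num, by norm_num, by norm_num, rfl⟩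
    simpa using h this
  obtain ⟨f, hf, hfm⟩ := exists_dual_vector ℝ ((1 / 2 : ℝ) • x + (1 / 2 : ℝ) • y)
    (by rw [hm]; norm_num)
  rw [hm] at hfm
  simp only [map_add, map_smul, smul_eq_mul, RCLike.ofReal_real_eq_id, id] at hfm
  have h1 := (le_abs_self _).trans (abs_apply_le hf x)
  have h2 := (le_abs_self _).trans (abs_apply_le hf y)
  exact ⟨hx, hy, f, hf, by linarith, by linarith⟩

/-! ### Non-extreme unit vectors in dimension two -/

lemma exists_of_not_extreme {y : X} (hy : ‖y‖ = 1)
    (hne : y ∉ extremePoints ℝ (closedBall (0 : X) 1)) :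
    ∃ u v : X, ∃ a b : ℝ, ‖u‖ ≤ 1 ∧ ‖v‖ ≤ 1 ∧ u ≠ v ∧ 0 < a ∧ 0 < b ∧ a + b = 1 ∧
      y = a • u + b • v := by
  by_contra hcon
  apply hne
  refine mem_extremePoints_iff_left.2 ⟨by simp [hy], ?_⟩
  rintro u hu v hv ⟨a, b, ha, hb, hab, rfl⟩
  by_contra huy
  refine hcon ⟨u, v, a, b, by simpa using hu, by simpa using hv, ?_, ha, hb, hab, rfl⟩
  rintro rfl
  apply huy
  rw [← add_smul, hab, one_smul]

lemma apply_eq_one_of_combo {f : X →L[ℝ] ℝ} (hf : ‖f‖ = 1) {u v : X} {a b : ℝ}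
    (hu : ‖u‖ ≤ 1) (hv : ‖v‖ ≤ 1) (ha : 0 < a) (hb : 0 < b) (hab : a + b = 1)
    (h : f (a • u + b • v) = 1) : f u = 1 ∧ f v = 1 := by
  have h1 := ((le_abs_self _).trans (abs_apply_le hf u)).trans hu
  have h2 := ((le_abs_self _).trans (abs_apply_le hf v)).trans hv
  simp only [map_add, map_smul, smul_eq_mul] at h
  constructor <;> nlinarith

lemma exists_coords (hdim : Module.finrank ℝ X = 2) {f : X →L[ℝ] ℝ} {u v : X}
    (hu : f u = 1) (hv : f v = 1) (huv : u ≠ v) (z : X) :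
    ∃ c d : ℝ, z = c • u + d • v := by
  have hli : LinearIndependent ℝ ![u, v] := by
    rw [LinearIndependent.pair_iff]
    intro s t hst
    have h1 : s + t = 0 := by
      have := congrArg f hst
      simpa [hu, hv] using this
    have ht : t = -s := by linarith
    subst ht
    have : s • (u - v) = 0 := by rw [← hst]; module
    rcases smul_eq_zero.1 this with h | h
    · simp [h]
    · exact absurd (sub_eq_zero.1 h) huv
  have : FiniteDimensional ℝ X := Module.finite_of_finrank_pos (by omega)
  have htop := hli.span_eq_top_of_card_eq_finrank' (by simp [hdim])
  have hz : z ∈ Submodule.span ℝ (Set.range ![u, v]) := htop ▸ Submodule.mem_top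
  simp only [Matrix.range_cons, Matrix.range_empty, union_empty, singleton_union] at hz
  obtain ⟨c, d, h⟩ := Submodule.mem_span_pair.1 hz
  exact ⟨c, d, h.symm⟩

lemma functional_unique (hdim : Module.finrank ℝ X = 2) {f g : X →L[ℝ] ℝ} {u v : X}
    (huv : u ≠ v) (hu : f u = 1) (hv : f v = 1) (gu : g u = 1) (gv : g v = 1) : f = g := by
  ext z
  obtain ⟨c, d, rfl⟩ := exists_coords hdim hu hv huv z
  simp [hu, hv, gu, gv]

/-- Near a non-extreme unit vector `y` the sphere is a line segment, so for `x` on the same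
supporting line the norm decreases with speed one from `y` in the direction `-x`: the vector
`y - t • x` has nonnegative coordinates with sum `1 - t` in a basis of two points of the ball. -/
lemma norm_sub_smul_le (hdim : Module.finrank ℝ X = 2) {f : X →L[ℝ] ℝ} (hf : ‖f‖ = 1) {x y : X}
    (hy : ‖y‖ = 1) (hfx : f x = 1) (hfy : f y = 1)
    (hne : y ∉ extremePoints ℝ (closedBall (0 : X) 1)) :
    ∃ δ > 0, ∀ t : ℝ, 0 ≤ t → t ≤ δ → ‖y - t • x‖ ≤ 1 - t := by
  obtain ⟨u, v, a, b, hu, hv, huv, ha, hb, hab, rfl⟩ := exists_of_not_extreme hy hne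
  obtain ⟨hfu, hfv⟩ := apply_eq_one_of_combo hf hu hv ha hb hab hfy
  obtain ⟨c, d, rfl⟩ := exists_coords hdim hfu hfv huv x
  have hcd : c + d = 1 := by simpa [hfu, hfv] using hfx
  have hD : 0 < |c| + |d| + 1 := by positivity
  refine ⟨min a b / (|c| + |d| + 1), by positivity, fun t ht htδ => ?_⟩
  rw [le_div_iff₀ hD] at htδ
  have h1 : 0 ≤ a - t * c := by
    nlinarith [min_le_left a b, mul_nonneg ht (abs_nonneg d),
      mul_nonneg ht (sub_nonneg.2 (le_abs_self c))]
  have h2 : 0 ≤ b - t * d := by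
    nlinarith [min_le_right a b, mul_nonneg ht (abs_nonneg c),
      mul_nonneg ht (sub_nonneg.2 (le_abs_self d))]
  have e : a • u + b • v - t • (c • u + d • v) = (a - t * c) • u + (b - t * d) • v := by module
  rw [e]
  refine (norm_add_le _ _).trans ?_
  rw [norm_smul, norm_smul, Real.norm_of_nonneg h1, Real.norm_of_nonneg h2]
  nlinarith [mul_le_mul_of_nonneg_left hu h1, mul_le_mul_of_nonneg_left hv h2]

/-- The first half of (P1) holds in every two-dimensional space. -/
lemma left_mem_extremePoints (hdim : Module.finrank ℝ X = 2) {f : X →L[ℝ] ℝ} (hf : ‖f‖ = 1)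
    {x y : X} (hx : ‖x‖ = 1) (hfx : f x = 1) (hfy : f y = 1) (h : BJOrth x y) :
    x ∈ extremePoints ℝ (closedBall (0 : X) 1) := by
  by_contra hne
  obtain ⟨δ, hδ, H⟩ := norm_sub_smul_le hdim hf hx hfy hfx hne
  have h1 := H δ hδ.le le_rfl
  have h2 := h (-δ)
  rw [neg_smul, ← sub_eq_add_neg] at h2
  linarith

/-! ### Consequences of orthogonality, homogeneity, edges -/

lemma not_bjorth_of_eq_or_neg {x y : X} (hx : ‖x‖ = 1) (h : BJOrth x y) (hxy : x = y ∨ -x = y) :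
    False := by
  rcases hxy with rfl | rfl
  · have := h (-1)
    simp only [neg_smul, one_smul, add_neg_cancel, norm_zero, hx] at this
    linarith
  · have := h 1
    simp only [one_smul, add_neg_cancel, norm_zero, hx] at this
    linarith

/-- (P1) in the form used below: the common supporting line may be taken up to sign of `x`. -/
lemma extreme_of_P1
    (H : ∀ x y : X, segment ℝ x y ⊆ sphere (0 : X) 1 → BJOrth x y →
      x ∈ extremePoints ℝ (closedBall (0 : X) 1) ∧ y ∈ extremePoints ℝ (closedBall (0 : X) 1))
    {f : X →L[ℝ] ℝ} (hf : ‖f‖ = 1) {x y : X} (hx : ‖x‖ = 1) (hy : ‖y‖ = 1)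
    (hfx : f x = 1 ∨ f x = -1) (hfy : f y = 1) (h : BJOrth x y) :
    y ∈ extremePoints ℝ (closedBall (0 : X) 1) := by
  rcases hfx with hfx | hfx
  · exact (H x y (segment_subset_sphere hf hx hy hfx hfy) h).2
  · exact (H (-x) y (segment_subset_sphere hf (by simpa) hy (by simp [hfx]) hfy) h.neg_left).2

lemma isClosed_bjorth (y : X) : IsClosed {x : X | BJOrth x y} := by
  simp only [BJOrth, ofPred_forall]
  exact isClosed_iInter fun t => isClosed_le (by fun_prop) (by fun_prop)

lemma borth_of_abs_le {ε : ℝ} {f : X →L[ℝ] ℝ} (hf : ‖f‖ = 1) {x y : X} (hx : ‖x‖ = 1)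
    (hy : ‖y‖ = 1) (hfy : f y = 1) (hfx : |f x| ≤ ε) : BOrth ε y x := by
  intro t
  have h1 := (le_abs_self _).trans (abs_apply_le hf (y + t • x))
  simp only [map_add, map_smul, smul_eq_mul, hfy] at h1
  have h2 : -(|t| * ε) ≤ t * f x := by
    have := neg_abs_le (t * f x)
    rw [abs_mul] at this
    nlinarith [mul_le_mul_of_nonneg_left hfx (abs_nonneg t)]
  rw [norm_smul, hx, hy, Real.norm_eq_abs]
  nlinarith [sq_nonneg (‖y + t • x‖ - 1)]

/-- Approximate symmetry is homogeneous, so unit vectors suffice. -/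
lemma borth_of_unit {ε : ℝ}
    (H : ∀ x y : X, ‖x‖ = 1 → ‖y‖ = 1 → BJOrth x y → BOrth ε y x) (x y : X) (h : BJOrth x y) :
    BOrth ε y x := by
  intro t
  by_cases hx : x = 0
  · simp [hx]
  by_cases hy : y = 0
  · simp only [hy, norm_zero]
    have := sq_nonneg ‖0 + t • x‖
    linarith
  have hxn : 0 < ‖x‖ := norm_pos_iff.2 hx
  have hyn : 0 < ‖y‖ := norm_pos_iff.2 hy
  have hx1 : ‖‖x‖⁻¹ • x‖ = 1 := by
    rw [norm_smul, norm_inv, norm_norm, inv_mul_cancel₀ hxn.ne']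
  have hy1 : ‖‖y‖⁻¹ • y‖ = 1 := by
    rw [norm_smul, norm_inv, norm_norm, inv_mul_cancel₀ hyn.ne']
  have horth : BJOrth (‖x‖⁻¹ • x) (‖y‖⁻¹ • y) := by
    intro s
    have e : ‖x‖⁻¹ • x + s • ‖y‖⁻¹ • y = ‖x‖⁻¹ • (x + (‖x‖ * s * ‖y‖⁻¹) • y) := by
      rw [smul_add, smul_smul, smul_smul]
      congr 2
      field_simp
    rw [e, norm_smul, norm_smul]
    exact mul_le_mul_of_nonneg_left (h _) (norm_nonneg _)
  have key := H _ _ hx1 hy1 horth (‖y‖⁻¹ * t * ‖x‖)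
  have e : ‖y‖⁻¹ • y + (‖y‖⁻¹ * t * ‖x‖) • ‖x‖⁻¹ • x = ‖y‖⁻¹ • (y + t • x) := by
    rw [smul_add, smul_smul, smul_smul]
    congr 2
    field_simp
  rw [e, hy1, norm_smul _ (‖x‖⁻¹ • x), hx1, norm_smul ‖y‖⁻¹, norm_mul, norm_mul, norm_inv,
    norm_norm, norm_norm] at key
  rw [norm_smul]
  have h2 := mul_le_mul_of_nonneg_left key (sq_nonneg ‖y‖)
  have e1 : ‖y‖ ^ 2 * (1 ^ 2 - 2 * ε * 1 * (‖y‖⁻¹ * ‖t‖ * ‖x‖ * 1)) =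
      ‖y‖ ^ 2 - 2 * ε * ‖y‖ * (‖t‖ * ‖x‖) := by
    field_simp
  have e2 : ‖y‖ ^ 2 * (‖y‖⁻¹ * ‖y + t • x‖) ^ 2 = ‖y + t • x‖ ^ 2 := by
    field_simp
  rw [e1, e2] at h2
  exact h2

/-- The functionals defining the edges of the unit ball: norm-one functionals equal to `1` at two
distinct extreme points. -/
def edgeFunctionals (X : Type*) [NormedAddCommGroup X] [NormedSpace ℝ X] : Set (X →L[ℝ] ℝ) :=
  {f | ‖f‖ = 1 ∧ ∃ u ∈ extremePoints ℝ (closedBall (0 : X) 1),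
    ∃ v ∈ extremePoints ℝ (closedBall (0 : X) 1), u ≠ v ∧ f u = 1 ∧ f v = 1}

lemma edgeFunctionals_finite (hdim : Module.finrank ℝ X = 2)
    (hpoly : (extremePoints ℝ (closedBall (0 : X) 1)).Finite) : (edgeFunctionals X).Finite := by
  have hfin : (⋃ u ∈ extremePoints ℝ (closedBall (0 : X) 1),
      ⋃ v ∈ extremePoints ℝ (closedBall (0 : X) 1),
      {f : X →L[ℝ] ℝ | u ≠ v ∧ f u = 1 ∧ f v = 1}).Finite := by
    refine hpoly.biUnion fun u _ => hpoly.biUnion fun v _ => Set.Subsingleton.finite ?_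
    rintro f ⟨huv, hu, hv⟩ g ⟨-, gu, gv⟩
    exact functional_unique hdim huv hu hv gu gv
  refine hfin.subset ?_
  rintro f ⟨-, u, hu, v, hv, h⟩
  simp only [mem_iUnion]
  exact ⟨u, hu, v, hv, h⟩

variable [FiniteDimensional ℝ X]

/-! ### Faces of a polyhedral ball -/

/-- Krein–Milman on the face of `B` cut out by `f = 1`. -/
lemma mem_hull_face (hpoly : (extremePoints ℝ (closedBall (0 : X) 1)).Finite)
    {f : X →L[ℝ] ℝ} (hf : ‖f‖ = 1) {z : X} (hz : ‖z‖ ≤ 1) (hfz : f z = 1) :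
    z ∈ convexHull ℝ {e ∈ extremePoints ℝ (closedBall (0 : X) 1) | f e = 1} := by
  have : ProperSpace X := FiniteDimensional.proper ℝ X
  let F : Set X := {w ∈ closedBall (0 : X) 1 | f w = 1}
  have hFext : IsExtreme ℝ (closedBall (0 : X) 1) F := by
    refine ⟨fun w hw => hw.1, ?_⟩
    rintro u hu v hv w hw ⟨a, b, ha, hb, hab, rfl⟩
    exact ⟨hu, (apply_eq_one_of_combo hf (by simpa using hu) (by simpa using hv)
      ha hb hab hw.2).1⟩
  have hsub : extremePoints ℝ F ⊆ {e ∈ extremePoints ℝ (closedBall (0 : X) 1) | f e = 1} :=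
    fun e he => ⟨hFext.extremePoints_subset_extremePoints he, he.1.2⟩
  have hfin := hpoly.subset (hsub.trans (sep_subset _ _))
  have hFclosed : IsClosed {w : X | f w = 1} := isClosed_eq (by fun_prop) (by fun_prop)
  have hFcomp : IsCompact F := (isCompact_closedBall (0 : X) 1).inter_right hFclosed
  have hFconv : Convex ℝ F := by
    refine (convex_closedBall (0 : X) 1).inter ?_
    exact convex_hyperplane f.toLinearMap.isLinear 1
  have hKM := closure_convexHull_extremePoints hFcomp hFconv
  rw [(hfin.isClosed_convexHull ℝ).closure_eq] at hKM
  have hzF : z ∈ F := ⟨by simpa using hz, hfz⟩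
  rw [← hKM] at hzF
  exact convexHull_mono hsub hzF

lemma exists_exposing (hpoly : (extremePoints ℝ (closedBall (0 : X) 1)).Finite)
    {y : X} (hy : y ∈ extremePoints ℝ (closedBall (0 : X) 1)) (hy1 : ‖y‖ = 1) :
    ∃ f : X →L[ℝ] ℝ, ‖f‖ = 1 ∧ f y = 1 ∧ ∀ z, ‖z‖ ≤ 1 → f z = 1 → z = y := by
  have : ProperSpace X := FiniteDimensional.proper ℝ X
  set B := closedBall (0 : X) 1 with hB
  set E := extremePoints ℝ B with hE
  have hBconv : Convex ℝ B := convex_closedBall (0 : X) 1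
  have hfin : (E \ {y}).Finite := hpoly.subset sdiff_subset
  have hnot : y ∉ convexHull ℝ (E \ {y}) := by
    have h1 := (hBconv.mem_extremePoints_iff_mem_sdiff_convexHull_sdiff.1 hy).2
    exact fun h2 => h1 (convexHull_mono (sdiff_subset_sdiff_left extremePoints_subset) h2)
  obtain ⟨g, s, hg1, hg2⟩ := geometric_hahn_banach_closed_point (convex_convexHull ℝ (E \ {y}))
    (hfin.isClosed_convexHull ℝ) hnot
  have hlt : ∀ e ∈ E, e ≠ y → g e < g y := fun e he hne =>
    (hg1 e (subset_convexHull ℝ _ ⟨he, hne⟩)).trans hg2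
  have hKM := closure_convexHull_extremePoints (isCompact_closedBall (0 : X) 1) hBconv
  rw [(hpoly.isClosed_convexHull ℝ).closure_eq] at hKM
  have hle : ∀ z ∈ B, g z ≤ g y := by
    have hc : Convex ℝ {z : X | g z ≤ g y} := convex_halfSpace_le g.toLinearMap.isLinear _
    intro z hz
    rw [hB, ← hKM] at hz
    refine convexHull_min (fun e he => ?_) hc hz
    by_cases hey : e = y
    · simp [hey]
    · exact (hlt e he hey).le
  have hgn : ‖g‖ ≤ g y := by
    have h0 : 0 ≤ g y := by simpa using hle 0 (by simp [hB])
    refine g.opNorm_le_of_unit_norm h0 fun z hz => ?_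
    rw [Real.norm_eq_abs, abs_le]
    have h1 := hle z (by simp [hB, hz])
    have h2 := hle (-z) (by simp [hB, hz])
    rw [map_neg] at h2
    constructor <;> linarith
  have hgn' : g y ≤ ‖g‖ := by
    have := (le_abs_self _).trans (g.le_opNorm y)
    rwa [hy1, mul_one] at this
  have hgeq : ‖g‖ = g y := le_antisymm hgn hgn'
  have hpos : 0 < g y := by
    rw [← hgeq, norm_pos_iff]
    rintro rfl
    -- if `g = 0`, the strict inequality on `E \ {y}` leaves `y` as the only extreme point
    have hEy : E ⊆ {y} := fun e he => by
      by_contra hne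
      simpa using hlt e he hne
    have hm : -y ∈ convexHull ℝ E := by rw [hKM]; simp [hy1]
    have hm' := convexHull_mono hEy hm
    rw [convexHull_singleton, mem_singleton_iff] at hm'
    have h2 : (2 : ℝ) • y = 0 := by
      rw [two_smul]
      nth_rewrite 1 [← hm']
      exact neg_add_cancel y
    have : y = 0 := (smul_eq_zero.1 h2).resolve_left two_ne_zero
    simp [this] at hy1
  have hfn : ‖(g y)⁻¹ • g‖ = 1 := by
    rw [norm_smul, hgeq, norm_inv, Real.norm_of_nonneg hpos.le, inv_mul_cancel₀ hpos.ne']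
  refine ⟨(g y)⁻¹ • g, hfn, by simp [hpos.ne'], fun z hz hfz => ?_⟩
  have hz' := mem_hull_face hpoly hfn hz hfz
  have hsub : {e ∈ extremePoints ℝ (closedBall (0 : X) 1) | ((g y)⁻¹ • g) e = 1} ⊆ {y} := by
    rintro e ⟨he, hge⟩
    by_contra hne
    have h1 := hlt e he hne
    simp only [smul_apply, smul_eq_mul] at hge
    rw [inv_mul_eq_one₀ hpos.ne'] at hge
    linarith
  simpa using convexHull_mono hsub hz'

/-- Upper semicontinuity of `J` in the strong form valid for polyhedral norms. If `f` supports
`z`, then `z` lies in the convex hull of a subset of the finite set of extreme points on which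
`f = 1`; among the finitely many such hulls, those missing `x` stay away from `x`. -/
lemma eventually_suppJ_subset (hpoly : (extremePoints ℝ (closedBall (0 : X) 1)).Finite)
    {x : X} (hx : ‖x‖ = 1) :
    ∀ᶠ z in nhds x, ‖z‖ = 1 → SuppJ z ⊆ SuppJ x := by
  have h1 : ∀ᶠ z in nhds x, ∀ A ∈ {A | A ⊆ extremePoints ℝ (closedBall (0 : X) 1)},
      z ∈ convexHull ℝ A → x ∈ convexHull ℝ A := by
    rw [Filter.eventually_all_finite hpoly.finite_subsets]
    intro A hA
    by_cases hxA : x ∈ convexHull ℝ A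
    · exact Filter.Eventually.of_forall fun _ _ => hxA
    · have hcl : IsClosed (convexHull ℝ A) := (hpoly.subset hA).isClosed_convexHull ℝ
      filter_upwards [hcl.isOpen_compl.mem_nhds hxA] with z hz hz'
      exact absurd hz' hz
  filter_upwards [h1] with z hz hz1 f hf
  have hfz : f z = 1 := by rw [hf.2, hz1]
  have hxA := hz _ (sep_subset _ _) (mem_hull_face hpoly hf.1 hz1.le hfz)
  refine ⟨hf.1, ?_⟩
  rw [hx]
  have hc : Convex ℝ {w : X | f w = 1} := convex_hyperplane f.toLinearMap.isLinear 1
  exact convexHull_min (fun e he => he.2) hc hxA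

lemma mem_edgeFunctionals (hpoly : (extremePoints ℝ (closedBall (0 : X) 1)).Finite)
    {f : X →L[ℝ] ℝ} (hf : ‖f‖ = 1) {y : X} (hy : ‖y‖ = 1) (hfy : f y = 1)
    (hne : y ∉ extremePoints ℝ (closedBall (0 : X) 1)) : f ∈ edgeFunctionals X := by
  have hm := mem_hull_face hpoly hf hy.le hfy
  by_contra hcon
  have hss : {e ∈ extremePoints ℝ (closedBall (0 : X) 1) | f e = 1}.Subsingleton := by
    intro u hu v hv
    by_contra huv
    exact hcon ⟨hf, u, hu.1, v, hv.1, huv, hu.2, hv.2⟩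
  rcases hss.eq_empty_or_singleton with h | ⟨e, h⟩
  · rw [h, convexHull_empty] at hm
    exact hm
  · have he : e ∈ {e ∈ extremePoints ℝ (closedBall (0 : X) 1) | f e = 1} := by rw [h]; rfl
    rw [h, convexHull_singleton, mem_singleton_iff] at hm
    exact hne (hm ▸ he.1)

/-! ### Uniform bounds for approximate symmetry -/

/-- The uniform bound for an edge functional `f`: by (P1), the vectors orthogonal to some
non-extreme point of the edge do not accumulate at the edge. -/
lemma eventually_edge (hpoly : (extremePoints ℝ (closedBall (0 : X) 1)).Finite)
    (H : ∀ x y : X, segment ℝ x y ⊆ sphere (0 : X) 1 → BJOrth x y →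
      x ∈ extremePoints ℝ (closedBall (0 : X) 1) ∧ y ∈ extremePoints ℝ (closedBall (0 : X) 1))
    {f : X →L[ℝ] ℝ} (hf : ‖f‖ = 1) :
    ∀ᶠ ε in nhdsWithin (1 : ℝ) (Iio 1), ∀ x y : X, ‖x‖ = 1 → ‖y‖ = 1 → BJOrth x y →
      f y = 1 → y ∉ extremePoints ℝ (closedBall (0 : X) 1) → |f x| ≤ ε := by
  have : ProperSpace X := FiniteDimensional.proper ℝ X
  let K : Set X := {x | ‖x‖ = 1 ∧ ∃ y : X, ‖y‖ = 1 ∧ BJOrth x y ∧ f y = 1 ∧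
    y ∉ extremePoints ℝ (closedBall (0 : X) 1)}
  have hKs : closure K ⊆ sphere (0 : X) 1 :=
    closure_minimal (fun x hx => by simpa using hx.1) isClosed_sphere
  have hKc : IsCompact (closure K) := (isCompact_sphere (0 : X) 1).of_isClosed_subset
    isClosed_closure hKs
  have hlt : ∀ x ∈ closure K, |f x| < 1 := by
    intro x hxK
    have hx : ‖x‖ = 1 := by simpa using hKs hxK
    refine lt_of_le_of_ne (hx ▸ abs_apply_le hf x) fun habs => ?_
    obtain ⟨z, hz, hz1, y, hy, hzy, hfy, hne⟩ :=
      mem_closure_iff_nhds.1 hxK _ (eventually_suppJ_subset hpoly hx)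
    obtain ⟨g, hg, hgy⟩ := hzy.exists_suppJ (by rintro rfl; simp at hz1)
    exact hne (extreme_of_P1 H hf hx hy (eq_or_eq_neg_of_abs_eq habs) hfy
      (BJOrth.of_suppJ (hz hz1 hg) hgy))
  filter_upwards [eventually_le_of_compact hKc (h := fun x => |f x|) (by fun_prop) hlt]
    with ε hε x y hx hy hxy hfy hne
  exact hε x (subset_closure ⟨hx, y, hy, hxy, hfy, hne⟩)

lemma eventually_vertex (hpoly : (extremePoints ℝ (closedBall (0 : X) 1)).Finite) (y : X)
    (hyE : y ∈ extremePoints ℝ (closedBall (0 : X) 1)) :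
    ∀ᶠ ε in nhdsWithin (1 : ℝ) (Iio 1), ∀ x : X, ‖x‖ = 1 → ‖y‖ = 1 → BJOrth x y →
      BOrth ε y x := by
  have : ProperSpace X := FiniteDimensional.proper ℝ X
  by_cases hy : ‖y‖ = 1
  swap
  · exact Filter.Eventually.of_forall fun ε x _ hy' => absurd hy' hy
  obtain ⟨g, hg, hgy, hexp⟩ := exists_exposing hpoly hyE hy
  have hK : IsCompact (sphere (0 : X) 1 ∩ {x | BJOrth x y}) :=
    (isCompact_sphere (0 : X) 1).inter_right (isClosed_bjorth y)
  have hlt : ∀ x ∈ sphere (0 : X) 1 ∩ {x | BJOrth x y}, |g x| < 1 := by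
    rintro x ⟨hxs, hxy⟩
    have hx : ‖x‖ = 1 := by simpa using hxs
    refine lt_of_le_of_ne (hx ▸ abs_apply_le hg x) fun habs => ?_
    refine not_bjorth_of_eq_or_neg hx hxy ?_
    rcases eq_or_eq_neg_of_abs_eq habs with h | h
    · exact Or.inl (hexp x hx.le h)
    · exact Or.inr (hexp (-x) (by simp [hx]) (by simp [h]))
  filter_upwards [eventually_le_of_compact hK (h := fun x => |g x|) (by fun_prop) hlt]
    with ε hε x hx _ hxy
  exact borth_of_abs_le hg hx hy hgy (hε x ⟨by simpa using hx, hxy⟩)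

end Helpers

theorem stmt_19 {X : Type*} [NormedAddCommGroup X] [NormedSpace ℝ X]
    [FiniteDimensional ℝ X] (hdim : Module.finrank ℝ X = 2)
    (hpoly : (Set.extremePoints ℝ (Metric.closedBall (0 : X) 1)).Finite) :
    List.TFAE
      [ ∀ x y : X, segment ℝ x y ⊆ Metric.sphere (0 : X) 1 → BJOrth x y →
          x ∈ Set.extremePoints ℝ (Metric.closedBall (0 : X) 1) ∧
          y ∈ Set.extremePoints ℝ (Metric.closedBall (0 : X) 1),
        ∀ x : X, ‖x‖ = 1 → LocalP x,
        ∃ ε ∈ Set.Ico (0 : ℝ) 1, ∀ x y : X, BJOrth x y → BOrth ε y x ] := by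
  tfae_have 1 → 2 := by
    rintro H x hx ⟨y, hy, hxy, hJ⟩
    have hval : ∀ f ∈ SuppJ y, f x = 1 ∨ f x = -1 := by
      intro f hf
      rcases hJ f hf with h | h
      · exact Or.inl (h.2.trans hx)
      · right
        have := h.2
        rw [hx, neg_apply] at this
        linarith
    obtain ⟨f, hf, hfy⟩ := exists_dual_vector ℝ y (by rw [hy]; norm_num)
    have hyE := extreme_of_P1 H hf hx hy (hval f ⟨hf, hfy⟩) (by simpa [hy] using hfy) hxy
    obtain ⟨g, hg, hgy, hexp⟩ := exists_exposing hpoly hyE hy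
    refine not_bjorth_of_eq_or_neg hx hxy ?_
    rcases hval g ⟨hg, by rw [hgy, hy]⟩ with h | h
    · exact Or.inl (hexp x hx.le h)
    · exact Or.inr (hexp (-x) (by simp [hx]) (by simp [h]))
  tfae_have 2 → 1 := by
    intro H x y hseg hxy
    obtain ⟨hx, hy, f, hf, hfx, hfy⟩ := exists_common_support hseg
    refine ⟨left_mem_extremePoints hdim hf hx hfx hfy hxy, ?_⟩
    by_contra hne
    refine H x hx ⟨y, hy, hxy, fun g hg => Or.inl ?_⟩
    obtain ⟨u, v, a, b, hu, hv, huv, ha, hb, hab, rfl⟩ := exists_of_not_extreme hy hne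
    obtain ⟨hfu, hfv⟩ := apply_eq_one_of_combo hf hu hv ha hb hab hfy
    obtain ⟨hgu, hgv⟩ := apply_eq_one_of_combo hg.1 hu hv ha hb hab (hg.2.trans hy)
    rw [← functional_unique hdim huv hfu hfv hgu hgv]
    exact ⟨hf, by rw [hfx, hx]⟩
  tfae_have 3 → 1 := by
    rintro ⟨ε, ⟨hε0, hε1⟩, H⟩ x y hseg hxy
    obtain ⟨hx, hy, f, hf, hfx, hfy⟩ := exists_common_support hseg
    refine ⟨left_mem_extremePoints hdim hf hx hfx hfy hxy, ?_⟩
    by_contra hne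
    obtain ⟨δ, hδ, hle⟩ := norm_sub_smul_le hdim hf hy hfx hfy hne
    -- `1 - 2 ε t ≤ (1 - t) ^ 2` fails for `0 < t < 2 (1 - ε)`
    have ht : 0 < min δ (1 - ε) := lt_min hδ (by linarith)
    set t := min δ (1 - ε) with htdef
    have h1 := hle t ht.le (min_le_left _ _)
    have h2 := H x y hxy (-t)
    have h3 : t ≤ 1 - ε := min_le_right _ _
    rw [norm_smul, norm_neg, Real.norm_of_nonneg ht.le, hx, hy, neg_smul, ← sub_eq_add_neg] at h2
    have h4 : ‖y - t • x‖ ^ 2 ≤ (1 - t) ^ 2 := pow_le_pow_left₀ (norm_nonneg _) h1 2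
    nlinarith
  tfae_have 1 → 3 := by
    intro H
    have hV := (Filter.eventually_all_finite hpoly).2 (eventually_vertex hpoly)
    have hF := (Filter.eventually_all_finite (edgeFunctionals_finite hdim hpoly)).2
      fun f hf => eventually_edge hpoly H hf.1
    have h01 : ∀ᶠ ε in nhdsWithin (1 : ℝ) (Iio 1), ε ∈ Ico (0 : ℝ) 1 :=
      Ico_mem_nhdsLT one_pos
    obtain ⟨ε, hεV, hεF, hε⟩ := (hV.and (hF.and h01)).exists
    refine ⟨ε, hε, borth_of_unit fun x y hx hy hxy => ?_⟩
    by_cases hyE : y ∈ extremePoints ℝ (closedBall (0 : X) 1)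
    · exact hεV y hyE x hx hy hxy
    · obtain ⟨f, hf, hfy⟩ := exists_dual_vector ℝ y (by rw [hy]; norm_num)
      have hfy1 : f y = 1 := by simpa [hy] using hfy
      exact borth_of_abs_le hf hx hy hfy1
        (hεF f (mem_edgeFunctionals hpoly hf hy hfy1 hyE) x y hx hy hxy hfy1 hyE)
  tfae_finish
end
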